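/- Let λ ∈ ℂ*, a, b ∈ ℂ, and let W ∈ O_𝔚 be a nontrivial simple 𝔚-module which is not a highest weight module. Then the Virasoro module L(W, λ, a, b) is simple if and only if λ ≠ 1 and b ≠ 1. -/

import Mathlib

/-- A representation of the Witt algebra `𝔚 = span{d_i : i ≥ -1}`, encoded by the family of
operators `d i` (only the indices `i ≥ -1` are relevant) satisfying
`[d_m, d_n] = (n - m) d_{m+n}`. -/
structure WittRep (W : Type*) [AddCommGroup W] [Module ℂ W] where
  d : ℤ → W →ₗ[ℂ] W
  comm : ∀ m n : ℤ, -1 ≤ m → -1 ≤ n →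
    d m ∘ₗ d n - d n ∘ₗ d m = (((n - m : ℤ) : ℂ)) • d (m + n)

namespace WittRep

variable {W : Type*} [AddCommGroup W] [Module ℂ W]

/-- Condition A : the module lies in the category `O_𝔚`. -/
def InO (ρ : WittRep W) : Prop :=
  ∀ v : W, ∃ n : ℕ, ∀ i : ℤ, (n : ℤ) ≤ i → ρ.d i v = 0

/-- The module is trivial: the Lie algebra acts by zero. -/
def IsTrivial (ρ : WittRep W) : Prop := ∀ i : ℤ, -1 ≤ i → ρ.d i = 0

/-- A `𝔚`-submodule. -/
def Invariant (ρ : WittRep W) (U : Submodule ℂ W) : Prop :=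
  ∀ i : ℤ, -1 ≤ i → ∀ u ∈ U, ρ.d i u ∈ U

/-- Simplicity of a `𝔚`-module. -/
def IsSimple (ρ : WittRep W) : Prop :=
  (∃ v : W, v ≠ 0) ∧ ∀ U : Submodule ℂ W, ρ.Invariant U → U = ⊥ ∨ U = ⊤

/-- A `𝔟`-submodule (`𝔟 = span{d_i : i ≥ 0}`). -/
def BInvariant (ρ : WittRep W) (U : Submodule ℂ W) : Prop :=
  ∀ i : ℤ, 0 ≤ i → ∀ u ∈ U, ρ.d i u ∈ U

/-- The socle `Soc_𝔟(W)`: the sum of the minimal nonzero `𝔟`-submodules. -/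
def Soc (ρ : WittRep W) : Submodule ℂ W :=
  sSup {U | ρ.BInvariant U ∧ U ≠ ⊥ ∧
    ∀ U' : Submodule ℂ W, ρ.BInvariant U' → U' ≠ ⊥ → U' ≤ U → U' = U}

/-- `w₀` is a highest weight vector of weight `b'`. -/
def IsHW (ρ : WittRep W) (w₀ : W) (b' : ℂ) : Prop :=
  w₀ ≠ 0 ∧ ρ.d 0 w₀ = b' • w₀ ∧ ∀ i : ℤ, 1 ≤ i → ρ.d i w₀ = 0

/-- `w₀` generates the `𝔚`-module. -/
def Generates (ρ : WittRep W) (w₀ : W) : Prop :=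
  ∀ U : Submodule ℂ W, ρ.Invariant U → w₀ ∈ U → U = ⊤

/-- The operator `e^{kt} d/dt = Σ_{i ≥ 0} (k^i/i!) d_{i-1}` (a finite sum on each vector of a
module in `O_𝔚`). -/
noncomputable def E (ρ : WittRep W) (k : ℤ) (w : W) : W :=
  ∑ᶠ i : ℕ, (((k : ℂ) ^ i) / (Nat.factorial i : ℂ)) • ρ.d ((i : ℤ) - 1) w

/-- The action of `d_k` on `L(W, λ, a, b) = W ⊗ ℂ[t, t⁻¹]`, realized on `ℤ →₀ W`
(`w ⊗ t^j ↦ Finsupp.single j w`):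
`d_k · (w ⊗ t^j) = ((λ^k e^{kt} − 1) d/dt + a + kb + j) w ⊗ t^{k+j}`. -/
noncomputable def Lact (ρ : WittRep W) (lam a b : ℂ) (k : ℤ) (f : ℤ →₀ W) : ℤ →₀ W :=
  f.sum fun j w => Finsupp.single (k + j)
    (lam ^ k • ρ.E k w - ρ.d (-1) w + (a + (k : ℂ) * b + (j : ℂ)) • w)

/-- The PBW map `ℕ →₀ ℂ → W`, `(k, c) ↦ c • d_{-1}^k w₀`. -/
noncomputable def pbwMap (ρ : WittRep W) (w₀ : W) : (ℕ →₀ ℂ) →ₗ[ℂ] W :=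
  Finsupp.lsum ℂ fun k : ℕ => ((ρ.d (-1)) ^ k) ∘ₗ LinearMap.toSpanSingleton ℂ W w₀

/-- `W` is the Verma `𝔚`-module with highest weight vector `w₀` of highest weight `b'`. -/
def IsVerma (ρ : WittRep W) (w₀ : W) (b' : ℂ) : Prop :=
  ρ.d 0 w₀ = b' • w₀ ∧ (∀ i : ℤ, 1 ≤ i → ρ.d i w₀ = 0) ∧
    Function.Bijective (ρ.pbwMap w₀)

/-- `W^{(n)} = Σ_{i=0}^n d_{-1}^i (Soc_𝔟 W)`. -/
noncomputable def Wn (ρ : WittRep W) (n : ℕ) : Submodule ℂ W :=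
  ⨆ i : Fin (n + 1), Submodule.map ((ρ.d (-1)) ^ (i : ℕ)) ρ.Soc

/-- `L₀(a, b') = span{d₁^i · (w₀ ⊗ t^{2j})} ⊆ L(W, -1, a, b' + 1)`. -/
noncomputable def Lzero (ρ : WittRep W) (a b' : ℂ) (w₀ : W) : Submodule ℂ (ℤ →₀ W) :=
  Submodule.span ℂ
    {g | ∃ (i : ℕ) (j : ℤ), g = (ρ.Lact (-1) a (b' + 1) 1)^[i] (Finsupp.single (2 * j) w₀)}

/-- `L₁(a, b') = span{d₁^i · (w₀ ⊗ t^{2j+1})} ⊆ L(W, -1, a, b' + 1)`. -/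
noncomputable def Lone (ρ : WittRep W) (a b' : ℂ) (w₀ : W) : Submodule ℂ (ℤ →₀ W) :=
  Submodule.span ℂ
    {g | ∃ (i : ℕ) (j : ℤ), g = (ρ.Lact (-1) a (b' + 1) 1)^[i] (Finsupp.single (2 * j + 1) w₀)}

end WittRep

/-- A representation of the Lie algebra `𝔟 = span{d_i : i ≥ 0}`. -/
structure BRep (B : Type*) [AddCommGroup B] [Module ℂ B] where
  d : ℕ → B →ₗ[ℂ] B
  comm : ∀ m n : ℕ, d m ∘ₗ d n - d n ∘ₗ d m = (((n : ℂ) - (m : ℂ))) • d (m + n)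

namespace BRep

variable {B : Type*} [AddCommGroup B] [Module ℂ B]

/-- Condition A : the module lies in the category `O_𝔟`. -/
def InO (ρ : BRep B) : Prop := ∀ v : B, ∃ n : ℕ, ∀ i : ℕ, n ≤ i → ρ.d i v = 0

def IsTrivial (ρ : BRep B) : Prop := ∀ i : ℕ, ρ.d i = 0

def IsSimple (ρ : BRep B) : Prop :=
  (∃ v : B, v ≠ 0) ∧
    ∀ U : Submodule ℂ B, (∀ i : ℕ, ∀ u ∈ U, ρ.d i u ∈ U) → U = ⊥ ∨ U = ⊤

/-- The set of `r ∈ ℤ≥0` such that `d_{r+i} v = 0` for all `i ≥ 1`;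
`ord_𝔟(v)` is its least element. -/
def ordSet (ρ : BRep B) (v : B) : Set ℕ := {r : ℕ | ∀ i : ℕ, r + 1 ≤ i → ρ.d i v = 0}

/-- The action of `d_m` on the Virasoro module `N(B_(c), a) = B ⊗ ℂ[t, t⁻¹]`, realized on
`ℤ →₀ B`:  `d_m · (w ⊗ t^j) = (Σ_{i≥1} (m^i/i!) d_{i-1} + mc + a + j) w ⊗ t^{m+j}`
(`c` is the twist of the `d₀`-action; `c = 0` gives `N(B, a)`). -/
noncomputable def Nact (ρ : BRep B) (a c : ℂ) (m : ℤ) (f : ℤ →₀ B) : ℤ →₀ B :=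
  f.sum fun j w => Finsupp.single (m + j)
    ((∑ᶠ i : ℕ, (((m : ℂ) ^ (i + 1)) / (Nat.factorial (i + 1) : ℂ)) • ρ.d i w) +
      ((m : ℂ) * c + a + (j : ℂ)) • w)

end BRep

/-- For a family `U : ℤ → Submodule ℂ W`, the subspace `⊕_j U j ⊗ t^j` of `W ⊗ ℂ[t,t⁻¹]`. -/
def gradedSub {W : Type*} [AddCommGroup W] [Module ℂ W] (U : ℤ → Submodule ℂ W) :
    Submodule ℂ (ℤ →₀ W) where
  carrier := {f | ∀ j, f j ∈ U j}
  add_mem' := fun hf hg j => by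
    simpa only [Finsupp.add_apply] using (U j).add_mem (hf j) (hg j)
  zero_mem' := fun j => by simp
  smul_mem' := fun c f hf j => by
    simpa only [Finsupp.smul_apply] using (U j).smul_mem c (hf j)

/-- A submodule invariant under a (ℤ-indexed) family of operators. -/
def ActInvariant {V : Type*} [AddCommGroup V] [Module ℂ V] (act : ℤ → V → V)
    (M : Submodule ℂ V) : Prop :=
  ∀ k : ℤ, ∀ u ∈ M, act k u ∈ M

/-- Simplicity of the module given by a family of operators (the central element acts by zero). -/
def ActSimple {V : Type*} [AddCommGroup V] [Module ℂ V] (act : ℤ → V → V) : Prop :=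
  (∃ v : V, v ≠ 0) ∧ ∀ M : Submodule ℂ V, ActInvariant act M → M = ⊥ ∨ M = ⊤

/-- A representation of the Virasoro algebra. -/
structure VirasoroRep (V : Type*) [AddCommGroup V] [Module ℂ V] where
  d : ℤ → V →ₗ[ℂ] V
  z : V →ₗ[ℂ] V
  comm : ∀ m n : ℤ, d m ∘ₗ d n - d n ∘ₗ d m =
    (((n - m : ℤ) : ℂ)) • d (m + n) +
      (if m + n = 0 then (((n : ℂ) ^ 3 - (n : ℂ)) / 12) else 0) • z
  comm_z : ∀ m : ℤ, d m ∘ₗ z = z ∘ₗ d m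

/-! Since `d_0` acts on `W ⊗ t ^ j` with eigenvalue `a + j`, every submodule of `L(W, λ, a, b)` is
a graded sum `⊕ U j ⊗ t ^ j`.

Suppose `λ ≠ 1` and `b ≠ 1`. For `w ∈ U j` and a functional `φ` vanishing on `U (s + j)`, the
vanishing of `φ` on `d_{s-k} d_k (w ⊗ t ^ j)` for all `k` is an exponential polynomial identity in
`k`. The terms in `λ ^ k` and `λ ^ (s - k)` separate from the rest, and from each other unless
`λ = -1`; in all cases this gives a reflection identity `P(X) + (-1) ^ s P(s - X) = 0`. For `s` of
the right parity its leading coefficient is a nonzero multiple of `φ (d_n w)`, where `d_n w` is the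
last nonzero `d_i w`; here `n ≥ 1`, because a nonzero space of vectors killed by all `d_i`, `i ≥ 1`,
would contain a highest weight vector. So `v = d_n w` lies in all `U l` with `l` of one parity.
Letting `s` vary in its parity class turns the reflection identity into one in two variables, which
gives `d_i v ∈ U l` for all `i ≥ 1` and all `l`. So `⋂ U l` is nonzero, and one more comparison of
coefficients makes it a `𝔚`-submodule; hence every `U l` is `W`.

Conversely, for `λ = 1` a `𝔟`-submodule `B` gives the submodule `B ⊗ ℂ[t, t⁻¹]`, and for `b = 1` the
ranges of `d_{-1} - (a + j)` form a submodule. Both are proper, because `d_{-1} - c` moves a vector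
not killed by all `d_i`, `i ≥ n`, to one not killed by all `d_i`, `i ≥ n + 1`.
-/

open Polynomial

lemma eq_zero_of_forall_eval_eq_zero {R ι : Type*} [CommRing R] [IsDomain R] [Infinite ι]
    {x : ι → R} (hx : Function.Injective x) {p : R[X]} (h : ∀ i, p.eval (x i) = 0) : p = 0 :=
  eq_zero_of_infinite_isRoot p <|
    (Set.infinite_range_of_injective hx).mono (Set.range_subset_iff.2 h)

section ExponentialPolynomials

variable {K : Type*} [Field K]

/-- The shift `f ↦ f (· + 1)` on functions `ℤ → K`; the functions `k ↦ p(k) μ ^ k` with `p` a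
polynomial are generalized eigenvectors of it. -/
def intShift (K : Type*) [Field K] : Module.End K (ℤ → K) :=
  LinearMap.funLeft K K (· + 1)

lemma eval_mul_zpow_mem_maxGenEigenspace {μ : K} (hμ : μ ≠ 0) (p : K[X]) :
    (fun k : ℤ => p.eval (k : K) * μ ^ k) ∈ (intShift K).maxGenEigenspace μ := by
  induction hd : p.degree using WellFoundedLT.induction generalizing p with
  | ind d ih =>
    rcases eq_or_ne p 0 with rfl | hp
    · convert Submodule.zero_mem _ using 1
      ext k
      simp
    have hlt : (μ • (taylor 1 p - p)).degree < d := by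
      rw [← hd]
      refine (degree_smul_le _ _).trans_lt ?_
      have h := degree_sub_lt_left (degree_taylor p 1) (by simpa using hp) (leadingCoeff_taylor 1 p)
      rwa [degree_taylor] at h
    obtain ⟨n, hn⟩ := (Module.End.mem_maxGenEigenspace _ _ _).1 (ih _ hlt _ rfl)
    refine (Module.End.mem_maxGenEigenspace _ _ _).2 ⟨n + 1, ?_⟩
    rw [pow_succ, Module.End.mul_apply]
    convert hn using 2
    ext k
    simp only [intShift, LinearMap.sub_apply, LinearMap.smul_apply, Module.End.one_apply,
      Pi.sub_apply, Pi.smul_apply, LinearMap.funLeft_apply, Int.cast_add, Int.cast_one,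
      zpow_add_one₀ hμ, smul_eq_mul, eval_smul, eval_sub, taylor_eval]
    ring

lemma eq_zero_of_sum_eval_mul_zpow_eq_zero [CharZero K] {ι : Type*} [Fintype ι] {μ : ι → K}
    (hinj : Function.Injective μ) (hμ : ∀ i, μ i ≠ 0) {p : ι → K[X]}
    (h : ∀ k : ℤ, ∑ i, (p i).eval (k : K) * μ i ^ k = 0) (i : ι) : p i = 0 := by
  have hind := (Module.End.independent_maxGenEigenspace (intShift K)).comp hinj
  have hzero := (iSupIndep_iff_finsetSum_eq_zero_imp_eq_zero _).1 hind Finset.univ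
    (fun i k => (p i).eval (k : K) * μ i ^ k)
    (fun i _ => eval_mul_zpow_mem_maxGenEigenspace (hμ i) (p i))
    (by ext k; simpa using h k) i (Finset.mem_univ i)
  refine eq_zero_of_forall_eval_eq_zero (Int.cast_injective (α := K)) fun k => ?_
  simpa [hμ i, zpow_ne_zero] using congrFun hzero k

lemma add_neg_one_zpow_mul_eq_zero [CharZero K] {μ : K} (h0 : μ ≠ 0) (h1 : μ ≠ 1) (s : ℤ)
    {p q r : K[X]} (h : ∀ k : ℤ, p.eval (k : K) * μ ^ k + q.eval (k : K) * μ ^ (s - k) +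
      r.eval (k : K) = 0) : p + C ((-1) ^ s) * q = 0 := by
  by_cases hμ : μ = -1
  · subst hμ
    refine eq_zero_of_sum_eval_mul_zpow_eq_zero (μ := ![-1, 1]) (p := ![p + C ((-1) ^ s) * q, r])
      ?_ ?_ (fun k => ?_) 0
    · intro i j
      fin_cases i <;> fin_cases j <;> simp [h1, h1.symm]
    · intro i
      fin_cases i <;> simp
    · have hk : ((-1 : K)) ^ (s - k) = (-1) ^ s * (-1) ^ k := by
        rw [zpow_sub₀ h0, div_eq_mul_inv, ← inv_zpow, inv_neg, inv_one]
      rw [← h k, hk]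
      simp only [Fin.sum_univ_two, Matrix.cons_val_zero, Matrix.cons_val_one, eval_add, eval_mul,
        eval_C, one_zpow]
      ring
  · have hinv : μ⁻¹ ≠ μ := fun h' => by
      rcases mul_self_eq_one_iff.1 ((inv_eq_iff_eq_inv.1 h').symm ▸ mul_inv_cancel₀ h0) with h | h
      exacts [h1 h, hμ h]
    have hsep := eq_zero_of_sum_eval_mul_zpow_eq_zero (μ := ![μ, μ⁻¹, 1])
      (p := ![p, C (μ ^ s) * q, r]) ?_ ?_ (fun k => ?_)
    · have hp : p = 0 := hsep 0
      have hq : q = 0 := by simpa [h0, zpow_ne_zero] using hsep 1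
      simp [hp, hq]
    · intro i j
      fin_cases i <;> fin_cases j <;> simp [h1, h1.symm, hinv, hinv.symm, eq_comm]
    · intro i
      fin_cases i <;> simp [h0]
    · rw [← h k, zpow_sub₀ h0]
      simp only [Fin.sum_univ_three, Matrix.cons_val, eval_mul, eval_C, inv_zpow', zpow_neg,
        one_zpow]
      ring

end ExponentialPolynomials

lemma coeff_comp_C_sub_X {R : Type*} [CommRing R] {p : R[X]} {m : ℕ} (hp : p.natDegree ≤ m)
    (s : R) : (p.comp (C s - X)).coeff m = (-1) ^ m * p.coeff m := by
  rcases subsingleton_or_nontrivial R with _ | _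
  · exact Subsingleton.elim _ _
  have hdeg : (C s - X : R[X]).natDegree = 1 := by
    rw [← natDegree_neg, neg_sub, natDegree_X_sub_C]
  have hlead : (C s - X : R[X]).leadingCoeff = -1 := by
    rw [← neg_sub, leadingCoeff_neg, leadingCoeff_X_sub_C]
  rcases hp.lt_or_eq with hlt | rfl
  · rw [coeff_eq_zero_of_natDegree_lt hlt, mul_zero, coeff_eq_zero_of_natDegree_lt]
    exact natDegree_comp_le.trans_lt (by rwa [hdeg, mul_one])
  · have h := coeff_comp_degree_mul_degree (p := p) (q := C s - X) (by rw [hdeg]; exact one_ne_zero)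
    rwa [hdeg, mul_one, hlead, mul_comm] at h

section Eigenvectors

variable {K V : Type*} [Field K] [AddCommGroup V] [Module K V] {f : Module.End K V}

lemma mem_of_sum_eigenvectors_mem {M : Submodule K V} (hM : ∀ v ∈ M, f v ∈ M) {ι : Type*}
    {s : Finset ι} {μ : ι → K} (hμ : Function.Injective μ) {x : ι → V}
    (hx : ∀ i, f (x i) = μ i • x i) (hs : ∑ i ∈ s, x i ∈ M) {i : ι} (hi : i ∈ s) : x i ∈ M := by
  have hind := (Module.End.eigenspaces_iSupIndep (M.mapQ M f hM)).comp hμ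
  rw [← Submodule.Quotient.mk_eq_zero M]
  refine (iSupIndep_iff_finsetSum_eq_zero_imp_eq_zero _).1 hind s (fun i => M.mkQ (x i))
    (fun i _ => ?_) ?_ i hi
  · simp [hx]
  · rwa [← map_sum, Submodule.mkQ_apply, Submodule.Quotient.mk_eq_zero]

lemma exists_eigenvector_of_aeval_apply_eq_zero [IsAlgClosed K] {p : K[X]} (hp : p ≠ 0) {u : V}
    (hu : u ≠ 0) (h : aeval f p u = 0) :
    ∃ (q : K[X]) (c : K), aeval f q u ≠ 0 ∧ f (aeval f q u) = c • aeval f q u := by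
  induction hd : p.natDegree generalizing p with
  | zero =>
    rw [eq_C_of_natDegree_eq_zero hd] at h hp
    simp_all
  | succ n ih =>
    obtain ⟨c, hc⟩ := IsAlgClosed.exists_root p
      (by rw [degree_eq_natDegree hp, hd]; exact_mod_cast n.succ_ne_zero)
    obtain ⟨q, rfl⟩ := dvd_iff_isRoot.2 hc
    by_cases hq : aeval f q u = 0
    · refine ih (right_ne_zero_of_mul hp) hq ?_
      rw [natDegree_mul (X_sub_C_ne_zero c) (right_ne_zero_of_mul hp), natDegree_X_sub_C] at hd
      lia
    · refine ⟨q, c, hq, ?_⟩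
      simpa [sub_eq_zero] using h

lemma exists_eigenvector_of_minimal [IsAlgClosed K] {N : Submodule K V} (hf : ∀ v ∈ N, f v ∈ N)
    (hN : N ≠ ⊥) (hmin : ∀ N' ≤ N, N' ≠ ⊥ → (∀ v ∈ N', f v ∈ N') → N' = N) :
    ∃ u ∈ N, u ≠ 0 ∧ ∃ c : K, f u = c • u := by
  have hmem (p : K[X]) {v : V} (hv : v ∈ N) : aeval f p v ∈ N := by
    rw [aeval_eq_sum_range, LinearMap.sum_apply]
    exact N.sum_mem fun i _ => N.smul_mem _ (Module.End.pow_apply_mem_of_forall_mem i hf v hv)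
  obtain ⟨u, huN, hu⟩ := N.exists_mem_ne_zero_of_ne_bot hN
  by_cases hfu : f u = 0
  · exact ⟨u, huN, hu, 0, by simp [hfu]⟩
  set N' := LinearMap.range ((LinearMap.applyₗ (f u)).comp (aeval f).toLinearMap)
  have hN'N : N' = N := by
    refine hmin N' ?_ ?_ ?_
    · rintro _ ⟨p, rfl⟩
      exact hmem p (hf u huN)
    · exact N'.ne_bot_iff.2 ⟨f u, ⟨1, by simp⟩, hfu⟩
    · rintro _ ⟨p, rfl⟩
      exact ⟨X * p, by simp⟩
  obtain ⟨q, hq⟩ : u ∈ N' := hN'N ▸ huN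
  have hann : aeval f (1 - q * X) u = 0 := by
    simpa [sub_eq_zero] using hq.symm
  have hne : 1 - q * X ≠ 0 := fun h => by simpa using congrArg (eval 0) h
  obtain ⟨p, c, hp, hc⟩ := exists_eigenvector_of_aeval_apply_eq_zero hne hu hann
  exact ⟨_, hmem p huN, hp, c, hc⟩

end Eigenvectors

namespace WittRep

variable {W : Type*} [AddCommGroup W] [Module ℂ W] {ρ : WittRep W}

lemma d_d_apply (ρ : WittRep W) {m n : ℤ} (hm : -1 ≤ m) (hn : -1 ≤ n) (w : W) :
    ρ.d m (ρ.d n w) = ρ.d n (ρ.d m w) + ((n - m : ℤ) : ℂ) • ρ.d (m + n) w :=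
  sub_eq_iff_eq_add'.1 (LinearMap.congr_fun (ρ.comm m n hm hn) w)

section KilledFrom

/-- The vectors killed by `d i` for all `i ≥ n`. -/
def killedFrom (ρ : WittRep W) (n : ℕ) : Submodule ℂ W :=
  ⨅ i : ℤ, ⨅ _ : (n : ℤ) ≤ i, LinearMap.ker (ρ.d i)

lemma mem_killedFrom {n : ℕ} {v : W} :
    v ∈ ρ.killedFrom n ↔ ∀ i : ℤ, (n : ℤ) ≤ i → ρ.d i v = 0 := by
  simp [killedFrom]

lemma killedFrom_mono : Monotone ρ.killedFrom := fun _ _ h _ hv =>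
  mem_killedFrom.2 fun i hi => mem_killedFrom.1 hv i (by lia)

lemma bInvariant_killedFrom (n : ℕ) : ρ.BInvariant (ρ.killedFrom n) := by
  intro i hi v hv
  rw [mem_killedFrom] at hv ⊢
  intro j hj
  rw [ρ.d_d_apply (by lia) (by lia), hv j hj, hv (j + i) (by lia), map_zero, smul_zero, add_zero]

lemma exists_d_ne_zero (hO : ρ.InO) {m : ℕ} {v : W} (hv : v ∉ ρ.killedFrom m) :
    ∃ n : ℕ, m ≤ n ∧ ρ.d n v ≠ 0 ∧ v ∈ ρ.killedFrom (n + 1) := by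
  classical
  have hex : ∃ n, v ∈ ρ.killedFrom n := (hO v).imp fun _ => mem_killedFrom.2
  have hm : m < Nat.find hex := (Nat.lt_find_iff hex m).2 fun n hn h => hv (killedFrom_mono hn h)
  obtain ⟨n, hn⟩ := Nat.exists_eq_add_one_of_ne_zero (Nat.ne_zero_of_lt hm)
  have hmem : v ∈ ρ.killedFrom (n + 1) := hn ▸ Nat.find_spec hex
  refine ⟨n, by lia, fun h0 => Nat.find_min hex (m := n) (by lia) ?_, hmem⟩
  refine mem_killedFrom.2 fun i hi => ?_
  rcases hi.eq_or_lt with rfl | hlt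
  exacts [h0, mem_killedFrom.1 hmem i (by exact_mod_cast hlt)]

-- If `d n v` is the last nonzero `d i v`, then `d (n + 1) (d (-1) v - c • v) = -(n + 2) • d n v`.
lemma d_neg_one_sub_smul_notMem_killedFrom (hO : ρ.InO) {m : ℕ} {v : W}
    (hv : v ∉ ρ.killedFrom m) (c : ℂ) : ρ.d (-1) v - c • v ∉ ρ.killedFrom (m + 1) := by
  obtain ⟨n, hmn, hn, hkill⟩ := exists_d_ne_zero hO hv
  intro hmem
  have h0 := mem_killedFrom.1 hmem (n + 1) (by push_cast; lia)
  rw [map_sub, map_smul, ρ.d_d_apply (by lia) le_rfl, mem_killedFrom.1 hkill (n + 1) (by simp),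
    map_zero, smul_zero, zero_add, sub_zero, add_neg_cancel_right, smul_eq_zero] at h0
  exact h0.elim (fun h => by norm_cast at h) hn

lemma killedFrom_ne_top (hO : ρ.InO) (hnt : ¬ ρ.IsTrivial) (n : ℕ) : ρ.killedFrom n ≠ ⊤ := by
  induction n with
  | zero =>
    intro htop
    have hkill : ∀ i : ℤ, 0 ≤ i → ∀ v, ρ.d i v = 0 := fun i hi v =>
      mem_killedFrom.1 (htop ▸ Submodule.mem_top : v ∈ ρ.killedFrom 0) i hi
    refine hnt fun i hi => LinearMap.ext fun v => ?_
    rcases hi.eq_or_lt with rfl | hlt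
    · simpa [hkill 0 le_rfl] using ρ.d_d_apply (m := 0) (n := -1) (by lia) le_rfl v
    · exact hkill i (by lia) v
  | succ n ih =>
    obtain ⟨v, -, hv⟩ := SetLike.exists_of_lt (lt_top_iff_ne_top.2 ih)
    exact fun htop => d_neg_one_sub_smul_notMem_killedFrom hO hv 0 (htop ▸ Submodule.mem_top)

lemma exists_killedFrom_ne_bot (hO : ρ.InO) (hs : ρ.IsSimple) : ∃ n, ρ.killedFrom n ≠ ⊥ := by
  obtain ⟨v, hv⟩ := hs.1
  obtain ⟨n, hn⟩ := hO v
  exact ⟨n, (Submodule.ne_bot_iff _).2 ⟨v, mem_killedFrom.2 hn, hv⟩⟩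

-- The smallest `d (-1)`-stable subspace containing `B` is invariant: its elements sent back into it
-- by every `d i` form a subspace of the same kind.
lemma eq_top_of_bInvariant_le (hs : ρ.IsSimple) {B U : Submodule ℂ W} (hB : ρ.BInvariant B)
    (hB0 : B ≠ ⊥) (hBU : B ≤ U) (hU : ∀ u ∈ U, ρ.d (-1) u ∈ U) : U = ⊤ := by
  set S : Set (Submodule ℂ W) := {U | B ≤ U ∧ ∀ u ∈ U, ρ.d (-1) u ∈ U}
  set T : Submodule ℂ W := sInf S ⊓ ⨅ i : ℤ, ⨅ _ : 0 ≤ i, (sInf S).comap (ρ.d i)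
  have hmemT {x : W} : x ∈ T ↔ x ∈ sInf S ∧ ∀ i, 0 ≤ i → ρ.d i x ∈ sInf S := by simp [T]
  have hB_le : B ≤ sInf S := le_sInf fun _ h => h.1
  have hstable : ∀ u ∈ sInf S, ρ.d (-1) u ∈ sInf S := fun u hu =>
    Submodule.mem_sInf.2 fun V hV => hV.2 u (Submodule.mem_sInf.1 hu V hV)
  have hTS : T ∈ S := by
    refine ⟨fun x hx => hmemT.2 ⟨hB_le hx, fun i hi => hB_le (hB i hi x hx)⟩, fun x hx => ?_⟩
    rw [hmemT] at hx ⊢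
    refine ⟨hstable x hx.1, fun i hi => ?_⟩
    rw [ρ.d_d_apply (by lia) le_rfl]
    refine add_mem (hstable _ (hx.2 i hi)) (Submodule.smul_mem _ _ ?_)
    rcases hi.eq_or_lt with rfl | hlt
    exacts [hstable x hx.1, hx.2 (i + -1) (by lia)]
  have hinv : ρ.Invariant (sInf S) := fun i hi u hu => by
    rcases hi.eq_or_lt with rfl | hlt
    exacts [hstable u hu, (hmemT.1 (sInf_le hTS hu)).2 i (by lia)]
  have htop : sInf S = ⊤ := (hs.2 _ hinv).resolve_left (ne_bot_of_le_ne_bot hB0 hB_le)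
  exact top_le_iff.1 (htop ▸ sInf_le ⟨hBU, hU⟩)

lemma sup_range_d_neg_one_eq_top (hs : ρ.IsSimple) {B : Submodule ℂ W} (hB : ρ.BInvariant B)
    (hB0 : B ≠ ⊥) : B ⊔ LinearMap.range (ρ.d (-1)) = ⊤ :=
  eq_top_of_bInvariant_le hs hB hB0 le_sup_left
    fun u _ => Submodule.mem_sup_right (LinearMap.mem_range_self _ u)

lemma killedFrom_zero_eq_bot (hnhw : ¬ ∃ (w₀ : W) (c : ℂ), ρ.IsHW w₀ c) :
    ρ.killedFrom 0 = ⊥ := by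
  refine (Submodule.eq_bot_iff _).2 fun v hv => by_contra fun hv0 => hnhw ⟨v, 0, hv0, ?_, ?_⟩
  · simpa using mem_killedFrom.1 hv 0 le_rfl
  · exact fun i hi => mem_killedFrom.1 hv i (by simpa using zero_le_one.trans hi)

-- `killedFrom 1` is a simple `d 0`-module, hence would be spanned by a highest weight vector.
lemma killedFrom_one_eq_bot (hO : ρ.InO) (hs : ρ.IsSimple)
    (hnhw : ¬ ∃ (w₀ : W) (c : ℂ), ρ.IsHW w₀ c) : ρ.killedFrom 1 = ⊥ := by
  by_contra hne
  have hmin : ∀ B ≤ ρ.killedFrom 1, B ≠ ⊥ → (∀ v ∈ B, ρ.d 0 v ∈ B) → B = ρ.killedFrom 1 := by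
    refine fun B hle hB0 hd => hle.antisymm fun x hx => ?_
    have hB : ρ.BInvariant B := fun i hi u hu => by
      rcases hi.eq_or_lt with rfl | hlt
      · exact hd u hu
      · rw [mem_killedFrom.1 (hle hu) i (by simpa using Int.add_one_le_of_lt hlt)]
        exact B.zero_mem
    obtain ⟨y, hy, -, ⟨v, rfl⟩, rfl⟩ := Submodule.mem_sup.1
      (sup_range_d_neg_one_eq_top hs hB hB0 ▸ Submodule.mem_top : x ∈ _)
    have hv : v ∈ ρ.killedFrom 0 := by
      by_contra hv
      refine d_neg_one_sub_smul_notMem_killedFrom hO hv 0 ?_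
      simpa using sub_mem hx (hle hy)
    rw [killedFrom_zero_eq_bot hnhw, Submodule.mem_bot] at hv
    simpa [hv] using hy
  obtain ⟨u, hu, hu0, c, hc⟩ :=
    exists_eigenvector_of_minimal (bInvariant_killedFrom 1 0 le_rfl) hne hmin
  exact hnhw ⟨u, c, hu0, hc, fun i hi => mem_killedFrom.1 hu i (by simpa using hi)⟩

end KilledFrom

section Exponential

lemma InO.hasFiniteSupport (hO : ρ.InO) {N : Type*} [Zero N] {T : ℕ → W → N}
    (hT : ∀ i, T i 0 = 0) (w : W) :
    Function.HasFiniteSupport fun i : ℕ => T i (ρ.d ((i : ℤ) - 1) w) := by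
  obtain ⟨n, hn⟩ := hO w
  refine (Set.finite_Iic n).subset fun i hi => ?_
  by_contra hlt
  rw [Set.mem_Iic, not_le] at hlt
  exact hi (by simp only [hn _ (by lia : (n : ℤ) ≤ i - 1), hT])

lemma map_E (hO : ρ.InO) {N : Type*} [AddCommGroup N] [Module ℂ N] (T : W →ₗ[ℂ] N) (k : ℤ)
    (w : W) : T (ρ.E k w) =
      ∑ᶠ i : ℕ, ((k : ℂ) ^ i / (Nat.factorial i : ℂ)) • T (ρ.d ((i : ℤ) - 1) w) := by
  rw [E, map_finsum T (hO.hasFiniteSupport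
    (T := fun i v => ((k : ℂ) ^ i / (Nat.factorial i : ℂ)) • v) (by simp) w)]
  simp only [map_smul]

lemma E_zero_left (w : W) : ρ.E 0 w = ρ.d (-1) w := by
  refine (finsum_eq_single _ 0 fun i hi => ?_).trans (by simp)
  simp [hi]

/-- The operator `e^{kt} d/dt` as a linear map. -/
noncomputable def ELin (hO : ρ.InO) (k : ℤ) : W →ₗ[ℂ] W where
  toFun := ρ.E k
  map_add' v w := by
    simp only [E, map_add, smul_add]
    exact finsum_add_distrib (hO.hasFiniteSupport (by simp) v) (hO.hasFiniteSupport (by simp) w)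
  map_smul' c w := by
    simp only [E, map_smul, smul_comm _ c, smul_finsum, RingHom.id_apply]

lemma ELin_apply (hO : ρ.InO) (k : ℤ) (w : W) : ELin hO k w = ρ.E k w := rfl

/-- The polynomial `∑ i, φ (d (i - 1) w) / i! X ^ i`, whose value at `k` is `φ (e^{kt} d/dt w)`. -/
noncomputable def symbol (ρ : WittRep W) (φ : Module.Dual ℂ W) (w : W) : ℂ[X] :=
  ∑ᶠ i : ℕ, monomial i (φ (ρ.d ((i : ℤ) - 1) w) / (Nat.factorial i : ℂ))

lemma map_symbol (hO : ρ.InO) {N : Type*} [AddCommMonoid N] [Module ℂ N] (T : ℂ[X] →ₗ[ℂ] N)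
    (φ : Module.Dual ℂ W) (w : W) : T (ρ.symbol φ w) =
      ∑ᶠ i : ℕ, T (monomial i (φ (ρ.d ((i : ℤ) - 1) w) / (Nat.factorial i : ℂ))) :=
  map_finsum T (hO.hasFiniteSupport
    (T := fun i v => monomial i (φ v / (Nat.factorial i : ℂ))) (by simp) w)

lemma coeff_symbol (hO : ρ.InO) (φ : Module.Dual ℂ W) (w : W) (i : ℕ) :
    (ρ.symbol φ w).coeff i = φ (ρ.d ((i : ℤ) - 1) w) / (Nat.factorial i : ℂ) := by
  refine (map_symbol hO (lcoeff ℂ i) φ w).trans ((finsum_eq_single _ i fun j hj => ?_).trans ?_)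
  · exact coeff_monomial_of_ne _ hj.symm
  · exact coeff_monomial_same _ _

lemma coeff_symbol_eq_zero_iff (hO : ρ.InO) {φ : Module.Dual ℂ W} {w : W} {i : ℕ} :
    (ρ.symbol φ w).coeff i = 0 ↔ φ (ρ.d ((i : ℤ) - 1) w) = 0 := by
  simp [coeff_symbol hO, Nat.factorial_ne_zero]

lemma eval_symbol (hO : ρ.InO) (φ : Module.Dual ℂ W) (w : W) (k : ℤ) :
    (ρ.symbol φ w).eval (k : ℂ) = φ (ρ.E k w) := by
  refine (map_symbol hO (leval (k : ℂ)) φ w).trans ?_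
  rw [map_E hO]
  refine finsum_congr fun i => ?_
  rw [leval_apply, eval_monomial, smul_eq_mul]
  ring

lemma symbol_d_neg_one (hO : ρ.InO) (φ : Module.Dual ℂ W) (w : W) :
    ρ.symbol φ (ρ.d (-1) w) = ρ.symbol (φ ∘ₗ ρ.d (-1)) w - X * ρ.symbol φ w := by
  ext i
  rw [coeff_sub, coeff_symbol hO, coeff_symbol hO, ρ.d_d_apply (by lia) le_rfl]
  cases i with
  | zero => simp
  | succ n =>
    rw [coeff_X_mul, coeff_symbol hO, Nat.factorial_succ,
      show ((n + 1 : ℕ) : ℤ) - 1 + -1 = n - 1 by push_cast; ring]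
    have hn : (n : ℂ) + 1 ≠ 0 := by exact_mod_cast n.succ_ne_zero
    have hfact : (Nat.factorial n : ℂ) ≠ 0 := by exact_mod_cast n.factorial_ne_zero
    simp only [LinearMap.comp_apply, map_add, map_smul, smul_eq_mul]
    push_cast
    field_simp
    ring

lemma E_d_neg_one (hO : ρ.InO) (k : ℤ) (w : W) :
    ρ.E k (ρ.d (-1) w) = ρ.d (-1) (ρ.E k w) - (k : ℂ) • ρ.E k w := by
  rw [← sub_eq_zero, ← Module.forall_dual_apply_eq_zero_iff ℂ]
  intro φ
  have h := congrArg (eval (k : ℂ)) (symbol_d_neg_one hO φ w)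
  simp only [eval_sub, eval_mul, eval_X, eval_symbol hO, LinearMap.comp_apply] at h
  simp only [map_sub, map_smul, smul_eq_mul, h, sub_self]

lemma exists_eval_eq_apply_E_E (hO : ρ.InO) (φ : Module.Dual ℂ W) (s : ℤ) (w : W) :
    ∃ r : ℂ[X], ∀ k : ℤ, r.eval (k : ℂ) = φ (ρ.E (s - k) (ρ.E k w)) := by
  refine ⟨∑ᶠ i : ℕ, (C ((Nat.factorial i : ℂ)⁻¹) * X ^ i) *
    (ρ.symbol φ (ρ.d ((i : ℤ) - 1) w)).comp (C (s : ℂ) - X), fun k => ?_⟩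
  refine (map_finsum (leval (k : ℂ)) (hO.hasFiniteSupport (T := fun i v =>
    (C ((Nat.factorial i : ℂ)⁻¹) * X ^ i) * (ρ.symbol φ v).comp (C (s : ℂ) - X))
    (by simp [symbol]) w)).trans ?_
  refine (finsum_congr fun i => ?_).trans (map_E hO (φ ∘ₗ ELin hO (s - k)) k w).symm
  have h := eval_symbol hO φ (ρ.d ((i : ℤ) - 1) w) (s - k)
  simp only [Int.cast_sub] at h
  simp only [leval_apply, eval_mul, eval_C, eval_pow, eval_X, eval_comp, eval_sub, h, smul_eq_mul,
    LinearMap.comp_apply, ELin_apply]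
  ring

lemma BInvariant.E_sub_d_neg_one_mem (hO : ρ.InO) {B : Submodule ℂ W} (hB : ρ.BInvariant B)
    (k : ℤ) {w : W} (hw : w ∈ B) : ρ.E k w - ρ.d (-1) w ∈ B := by
  rw [← Submodule.Quotient.eq, ← B.mkQ_apply, map_E hO]
  refine (finsum_eq_single _ 0 fun i hi => ?_).trans (by simp)
  rw [B.mkQ_apply, (Submodule.Quotient.mk_eq_zero B).2 (hB _ (by lia) w hw), smul_zero]

end Exponential

section GradedSubmodules

/-- The condition on a family `U` of subspaces of `W` that `⊕ U j ⊗ t ^ j` be a submodule of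
`L(W, λ, a, b)`. -/
def IsStable (ρ : WittRep W) (lam a b : ℂ) (U : ℤ → Submodule ℂ W) : Prop :=
  ∀ k j : ℤ, ∀ w ∈ U j,
    lam ^ k • ρ.E k w - ρ.d (-1) w + (a + (k : ℂ) * b + (j : ℂ)) • w ∈ U (k + j)

/-- The subspace `{w | w ⊗ t ^ j ∈ M}` of `W`. -/
noncomputable def homogeneousComponent (M : Submodule ℂ (ℤ →₀ W)) (j : ℤ) : Submodule ℂ W :=
  M.comap (Finsupp.lsingle j)

lemma single_mem_gradedSub {U : ℤ → Submodule ℂ W} {j : ℤ} {w : W} :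
    Finsupp.single j w ∈ gradedSub U ↔ w ∈ U j := by
  refine ⟨fun h => by simpa using h j, fun h i => ?_⟩
  rcases eq_or_ne i j with rfl | hij
  · simpa using h
  · simp [Finsupp.single_eq_of_ne hij]

lemma gradedSub_injective :
    Function.Injective (gradedSub : (ℤ → Submodule ℂ W) → Submodule ℂ (ℤ →₀ W)) := by
  intro U V h
  ext j w
  rw [← single_mem_gradedSub, h, single_mem_gradedSub]

lemma gradedSub_bot : gradedSub (⊥ : ℤ → Submodule ℂ W) = ⊥ :=
  (Submodule.eq_bot_iff _).2 fun _ hf => Finsupp.ext hf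

lemma gradedSub_top : gradedSub (⊤ : ℤ → Submodule ℂ W) = ⊤ :=
  Submodule.eq_top_iff'.2 fun _ _ => Submodule.mem_top

lemma Lact_single (lam a b : ℂ) (k j : ℤ) (w : W) :
    ρ.Lact lam a b k (Finsupp.single j w) = Finsupp.single (k + j)
      (lam ^ k • ρ.E k w - ρ.d (-1) w + (a + (k : ℂ) * b + (j : ℂ)) • w) :=
  Finsupp.sum_single_index (by simp [E])

lemma Lact_zero_left (lam a b : ℂ) (f : ℤ →₀ W) :
    ρ.Lact lam a b 0 f =
      Finsupp.lsum ℂ (fun j : ℤ => (a + (j : ℂ)) • Finsupp.lsingle (R := ℂ) (M := W) j) f :=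
  Finsupp.sum_congr fun j _ => by simp [E_zero_left]

lemma actInvariant_gradedSub_iff {lam a b : ℂ} {U : ℤ → Submodule ℂ W} :
    ActInvariant (ρ.Lact lam a b) (gradedSub U) ↔ ρ.IsStable lam a b U := by
  refine ⟨fun h k j w hw => ?_, fun h k f hf => ?_⟩
  · simpa only [Lact_single, single_mem_gradedSub] using h k _ (single_mem_gradedSub.2 hw)
  · exact Submodule.sum_mem _ fun j _ => single_mem_gradedSub.2 (h k j _ (hf j))

-- The homogeneous components of `f` are eigenvectors of `d_0` with distinct eigenvalues `a + j`.
lemma gradedSub_homogeneousComponent {lam a b : ℂ} {M : Submodule ℂ (ℤ →₀ W)}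
    (hM : ActInvariant (ρ.Lact lam a b) M) : gradedSub (homogeneousComponent M) = M := by
  refine le_antisymm (fun f hf => ?_) (fun f hf j => ?_)
  · rw [← f.sum_single]
    exact M.sum_mem fun j _ => hf j
  have hsum : f.sum Finsupp.single ∈ M := by rwa [f.sum_single]
  by_cases hj : j ∈ f.support
  · refine mem_of_sum_eigenvectors_mem
      (f := Finsupp.lsum ℂ fun j : ℤ => (a + (j : ℂ)) • Finsupp.lsingle (R := ℂ) (M := W) j)
      (fun v hv => Lact_zero_left lam a b v ▸ hM 0 v hv) (μ := fun j : ℤ => a + (j : ℂ))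
      (fun i j h => by simpa using h) (x := fun j => Finsupp.single j (f j)) (fun i => by simp)
      hsum hj
  · rw [Finsupp.notMem_support_iff.1 hj]
    exact Submodule.zero_mem _

lemma actSimple_Lact_iff {lam a b : ℂ} : ActSimple (ρ.Lact lam a b) ↔
    (∃ w : W, w ≠ 0) ∧ ∀ U, ρ.IsStable lam a b U → U = ⊥ ∨ U = ⊤ := by
  refine and_congr ⟨fun ⟨f, hf⟩ => ?_, fun ⟨w, hw⟩ => ⟨Finsupp.single 0 w, by simpa using hw⟩⟩
    ⟨fun h U hU => ?_, fun h M hM => ?_⟩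
  · exact (Finsupp.ne_iff.1 hf).imp' f fun _ => id
  · refine (h _ (actInvariant_gradedSub_iff.2 hU)).imp (fun hbot => ?_) (fun htop => ?_)
    exacts [gradedSub_injective (hbot.trans gradedSub_bot.symm),
      gradedSub_injective (htop.trans gradedSub_top.symm)]
  · obtain ⟨U, rfl⟩ : ∃ U, gradedSub U = M := ⟨_, gradedSub_homogeneousComponent hM⟩
    exact (h U (actInvariant_gradedSub_iff.1 hM)).imp (by rintro rfl; exact gradedSub_bot)
      (by rintro rfl; exact gradedSub_top)

end GradedSubmodules

section Reducibility

lemma isStable_const (hO : ρ.InO) (a b : ℂ) {B : Submodule ℂ W} (hB : ρ.BInvariant B) :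
    ρ.IsStable 1 a b fun _ => B := fun k j w hw => by
  rw [one_zpow, one_smul]
  exact add_mem (hB.E_sub_d_neg_one_mem hO k hw) (B.smul_mem _ hw)

lemma isStable_range (hO : ρ.InO) (lam a : ℂ) :
    ρ.IsStable lam a 1 fun j => LinearMap.range (ρ.d (-1) - (a + (j : ℂ)) • LinearMap.id) := by
  rintro k j _ ⟨v, rfl⟩
  have hE : ρ.E k (ρ.d (-1) v - (a + (j : ℂ)) • v) =
      ρ.d (-1) (ρ.E k v) - (a + (k : ℂ) + (j : ℂ)) • ρ.E k v := by
    rw [← ELin_apply hO, map_sub, map_smul, ELin_apply, ELin_apply, E_d_neg_one hO]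
    module
  refine ⟨lam ^ k • ρ.E k v - (ρ.d (-1) v - (a + (j : ℂ)) • v), ?_⟩
  simp only [LinearMap.sub_apply, LinearMap.smul_apply, LinearMap.id_apply, map_sub, map_smul, hE]
  push_cast
  module

lemma lam_ne_one_of_actSimple (hO : ρ.InO) (hnt : ¬ ρ.IsTrivial) (hs : ρ.IsSimple) {lam a b : ℂ}
    (h : ActSimple (ρ.Lact lam a b)) : lam ≠ 1 := by
  rintro rfl
  obtain ⟨n, hn⟩ := exists_killedFrom_ne_bot hO hs
  rcases (actSimple_Lact_iff.1 h).2 _ (isStable_const hO a b (bInvariant_killedFrom n))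
    with hbot | htop
  exacts [hn (congrFun hbot 0), killedFrom_ne_top hO hnt n (congrFun htop 0)]

-- If `d (-1) - c` were onto, no vector of `W` would be killed by almost all `d i`.
lemma range_d_neg_one_sub_smul_ne_top (hO : ρ.InO) (hs : ρ.IsSimple)
    (hnhw : ¬ ∃ (w₀ : W) (c : ℂ), ρ.IsHW w₀ c) (c : ℂ) :
    LinearMap.range (ρ.d (-1) - c • LinearMap.id) ≠ ⊤ := by
  intro htop
  have hbot : ∀ n, ρ.killedFrom n = ⊥ := fun n => by
    induction n with
    | zero => exact killedFrom_zero_eq_bot hnhw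
    | succ n ih =>
      refine (Submodule.eq_bot_iff _).2 fun u hu => ?_
      obtain ⟨v, rfl⟩ := LinearMap.range_eq_top.1 htop u
      have hv : v ∈ ρ.killedFrom n := by
        by_contra hv
        exact d_neg_one_sub_smul_notMem_killedFrom hO hv c hu
      rw [ih, Submodule.mem_bot] at hv
      rw [hv, map_zero]
  obtain ⟨n, hn⟩ := exists_killedFrom_ne_bot hO hs
  exact hn (hbot n)

lemma b_ne_one_of_actSimple (hO : ρ.InO) (hs : ρ.IsSimple)
    (hnhw : ¬ ∃ (w₀ : W) (c : ℂ), ρ.IsHW w₀ c) {lam a b : ℂ}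
    (h : ActSimple (ρ.Lact lam a b)) : b ≠ 1 := by
  rintro rfl
  rcases (actSimple_Lact_iff.1 h).2 _ (isStable_range hO lam a) with hbot | htop
  · obtain ⟨w, hw⟩ := hs.1
    have hd (j : ℤ) : ρ.d (-1) w = (a + (j : ℂ)) • w := by
      have hj := LinearMap.congr_fun (LinearMap.range_eq_bot.1 (congrFun hbot j)) w
      simpa [sub_eq_zero] using hj
    simpa using smul_left_injective ℂ hw ((hd 0).symm.trans (hd 1))
  · exact range_d_neg_one_sub_smul_ne_top hO hs hnhw _ (congrFun htop 0)

end Reducibility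

section Simplicity

/-- The polynomial with value `φ ((c - k (b - 1) - d (-1)) (e^{kt} d/dt w))` at `k`: the coefficient
of `λ ^ k` in `φ (d_{s-k} d_k (w ⊗ t ^ j))`, where `c = a + j + s b`. -/
noncomputable def crossSymbol (ρ : WittRep W) (φ : Module.Dual ℂ W) (b c : ℂ) (w : W) : ℂ[X] :=
  (C c - C (b - 1) * X) * ρ.symbol φ w - ρ.symbol (φ ∘ₗ ρ.d (-1)) w

lemma eval_crossSymbol (hO : ρ.InO) (φ : Module.Dual ℂ W) (b c : ℂ) (w : W) (k : ℤ) :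
    (ρ.crossSymbol φ b c w).eval (k : ℂ) =
      (c - (b - 1) * k) * φ (ρ.E k w) - φ (ρ.d (-1) (ρ.E k w)) := by
  simp [crossSymbol, eval_symbol hO]

lemma coeff_crossSymbol_succ (φ : Module.Dual ℂ W) (b c : ℂ) (w : W) (i : ℕ) :
    (ρ.crossSymbol φ b c w).coeff (i + 1) = c * (ρ.symbol φ w).coeff (i + 1) -
      (b - 1) * (ρ.symbol φ w).coeff i - (ρ.symbol (φ ∘ₗ ρ.d (-1)) w).coeff (i + 1) := by
  simp [crossSymbol, sub_mul, mul_assoc]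

variable {lam a b : ℂ} {U : ℤ → Submodule ℂ W} {φ : Module.Dual ℂ W} {w : W}

-- Along `k`, the values `φ (d_{s-k} d_k (w ⊗ t ^ j)) = 0` are an exponential polynomial in which
-- `λ ^ k` and `λ ^ (s - k)` have the two summands below as coefficients.
lemma IsStable.crossSymbol_add_reflection_eq_zero (hU : ρ.IsStable lam a b U) (hO : ρ.InO)
    (h0 : lam ≠ 0) (h1 : lam ≠ 1) {s j : ℤ} (hφ : φ ∈ (U (s + j)).dualAnnihilator) (hw : w ∈ U j) :
    ρ.crossSymbol φ b (a + j + s * b) w +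
      C ((-1) ^ s) * (ρ.crossSymbol φ b (a + j + s * b) w).comp (C (s : ℂ) - X) = 0 := by
  obtain ⟨r, hr⟩ := exists_eval_eq_apply_E_E hO φ s w
  refine add_neg_one_zpow_mul_eq_zero h0 h1 s (r := C (lam ^ s) * r +
    (C (a + j + s * b) - C (b - 1) * X) * ((C (a + j) + C b * X) * C (φ w) - C (φ (ρ.d (-1) w))) -
    ((C (a + j) + C b * X) * C (φ (ρ.d (-1) w)) - C (φ (ρ.d (-1) (ρ.d (-1) w))))) fun k => ?_
  have hzero := (Submodule.mem_dualAnnihilator φ).1 hφ _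
    (show s - k + (k + j) = s + j by ring ▸ hU (s - k) (k + j) _ (hU k j w hw))
  have hlam : lam ^ s = lam ^ (s - k) * lam ^ k := by rw [← zpow_add₀ h0, sub_add_cancel]
  have hcomp : ((ρ.crossSymbol φ b (a + j + s * b) w).comp (C (s : ℂ) - X)).eval (k : ℂ) =
      (ρ.crossSymbol φ b (a + j + s * b) w).eval ((s - k : ℤ) : ℂ) := by
    simp
  rw [← ELin_apply hO] at hzero
  simp only [map_add, map_sub, map_smul, ELin_apply, E_d_neg_one hO, smul_eq_mul] at hzero
  rw [hcomp, eval_crossSymbol hO, eval_crossSymbol hO]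
  simp only [eval_add, eval_sub, eval_mul, eval_C, eval_X, hr, hlam]
  push_cast at hzero ⊢
  linear_combination hzero

lemma IsStable.d_mem_of_odd (hU : ρ.IsStable lam a b U) (hO : ρ.InO) (h0 : lam ≠ 0) (h1 : lam ≠ 1)
    (hb : b ≠ 1) {s j : ℤ} {n : ℕ} (hs : Odd (s + (n + 1))) (hw : w ∈ U j)
    (hkill : w ∈ ρ.killedFrom (n + 1)) : ρ.d n w ∈ U (s + j) := by
  refine (Subspace.forall_mem_dualAnnihilator_apply_eq_zero_iff _ _).1 fun φ hφ => ?_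
  have hsymbol (ψ : Module.Dual ℂ W) {i : ℕ} (hi : n + 1 < i) : (ρ.symbol ψ w).coeff i = 0 := by
    rw [coeff_symbol_eq_zero_iff hO, mem_killedFrom.1 hkill _ (by lia), map_zero]
  set P := ρ.crossSymbol φ b (a + j + s * b) w with hP
  have hdeg : P.natDegree ≤ n + 2 := natDegree_le_iff_coeff_eq_zero.2 fun i hi => by
    obtain ⟨i, rfl⟩ := Nat.exists_eq_add_one_of_ne_zero (Nat.ne_zero_of_lt hi)
    rw [hP, coeff_crossSymbol_succ, hsymbol φ (by lia), hsymbol φ (by lia), hsymbol _ (by lia)]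
    ring
  have htop : P.coeff (n + 2) = -((b - 1) * (ρ.symbol φ w).coeff (n + 1)) := by
    rw [hP, coeff_crossSymbol_succ, hsymbol φ (i := n + 1 + 1) (by lia),
      hsymbol (φ ∘ₗ ρ.d (-1)) (i := n + 1 + 1) (by lia)]
    ring
  have hsign : (-1 : ℂ) ^ s * (-1) ^ (n + 2) = 1 := by
    rw [← zpow_natCast, ← zpow_add₀ (by norm_num)]
    exact Even.neg_one_zpow (by push_cast; exact (add_assoc s _ 1 ▸ hs.add_one :))
  have hcoeff := congrArg (coeff · (n + 2)) (hU.crossSymbol_add_reflection_eq_zero hO h0 h1 hφ hw)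
  simp only [coeff_add, coeff_C_mul, coeff_comp_C_sub_X hdeg, ← hP, ← mul_assoc, hsign, htop,
    coeff_zero] at hcoeff
  have hzero : (ρ.symbol φ w).coeff (n + 1) = 0 := by
    simpa [sub_eq_zero, hb] using hcoeff
  simpa using (coeff_symbol_eq_zero_iff hO).1 hzero

-- For fixed `x` and parity of `s = x + y`, the reflection identity at `y` is polynomial in `y`.
lemma IsStable.two_variable_relation (hU : ρ.IsStable lam a b U) (hO : ρ.InO)
    (h0 : lam ≠ 0) (h1 : lam ≠ 1) {ε l : ℤ} (hφ : φ ∈ (U l).dualAnnihilator)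
    (hw : ∀ m, w ∈ U (ε + 2 * m)) (x : ℤ) :
    C (a + l + (b - 1) * x) * ρ.symbol φ w - ρ.symbol (φ ∘ₗ ρ.d (-1)) w +
      C ((-1) ^ (l - ε)) * (C ((a + l) * φ (ρ.E x w) - φ (ρ.d (-1) (ρ.E x w))) +
        C ((b - 1) * φ (ρ.E x w)) * X) = 0 := by
  have hinj : Function.Injective fun m : ℤ => ((l - ε - 2 * m - x : ℤ) : ℂ) := fun m m' h => by
    have := Int.cast_injective h
    lia
  refine eq_zero_of_forall_eval_eq_zero hinj fun m => ?_
  have hsign : (-1 : ℂ) ^ (l - ε - 2 * m) = (-1) ^ (l - ε) := by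
    rw [zpow_sub₀ (by norm_num), (even_two_mul m).neg_one_zpow, div_one]
  have hrel := congrArg (eval ((l - ε - 2 * m - x : ℤ) : ℂ))
    (hU.crossSymbol_add_reflection_eq_zero hO h0 h1 (s := l - ε - 2 * m) (j := ε + 2 * m)
      (by simpa using hφ) (hw m))
  have hx : (((l - ε - 2 * m : ℤ) : ℂ) - ((l - ε - 2 * m - x : ℤ) : ℂ)) = (x : ℂ) := by
    push_cast; ring
  simp only [eval_add, eval_mul, eval_C, eval_comp, eval_sub, eval_X, hx, hsign,
    eval_crossSymbol hO, eval_zero] at hrel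
  simp only [eval_add, eval_mul, eval_C, eval_sub, eval_X, eval_symbol hO,
    LinearMap.comp_apply]
  push_cast at hrel ⊢
  linear_combination hrel

lemma IsStable.d_mem_of_forall_mem_parity (hU : ρ.IsStable lam a b U) (hO : ρ.InO) (h0 : lam ≠ 0)
    (h1 : lam ≠ 1) (hb : b ≠ 1) {ε : ℤ} (hw : ∀ m, w ∈ U (ε + 2 * m)) {i : ℕ} (hi : 1 ≤ i) (l : ℤ) :
    ρ.d i w ∈ U l := by
  refine (Subspace.forall_mem_dualAnnihilator_apply_eq_zero_iff _ _).1 fun φ hφ => ?_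
  have hcoeff (x : ℤ) := congrArg (coeff · (i + 1)) (hU.two_variable_relation hO h0 h1 hφ hw x)
  have hzero : (ρ.symbol φ w).coeff (i + 1) = 0 := by
    have hX : (X : ℂ[X]).coeff (i + 1) = 0 := coeff_X_of_ne_one (by lia)
    have hdiff := (hcoeff 1).trans (hcoeff 0).symm
    simp only [coeff_add, coeff_sub, coeff_C_mul, coeff_C_succ, hX] at hdiff
    refine (mul_eq_zero.1 ?_).resolve_left (sub_ne_zero.2 hb)
    push_cast at hdiff
    linear_combination hdiff
  simpa using (coeff_symbol_eq_zero_iff hO).1 hzero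

lemma IsStable.d_mem_of_forall_mem (hU : ρ.IsStable lam a b U) (hO : ρ.InO) (h0 : lam ≠ 0)
    (h1 : lam ≠ 1) (hb : b ≠ 1) (hw : ∀ m, w ∈ U m) {i : ℤ} (hi : -1 ≤ i) (l : ℤ) :
    ρ.d i w ∈ U l := by
  refine (Subspace.forall_mem_dualAnnihilator_apply_eq_zero_iff _ _).1 fun φ hφ => ?_
  have hE (x : ℤ) : φ (ρ.E x w) = 0 := by
    have heven := hU.two_variable_relation hO h0 h1 (ε := l) hφ (fun _ => hw _) x
    have hodd := hU.two_variable_relation hO h0 h1 (ε := l + 1) hφ (fun _ => hw _) x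
    have hdiff := congrArg (coeff · 1) (heven.trans hodd.symm)
    simp only [sub_self, zpow_zero, sub_add_cancel_left, zpow_neg_one, inv_neg, inv_one, coeff_add,
      coeff_sub, coeff_C_mul, coeff_C_succ, coeff_X_one] at hdiff
    refine (mul_eq_zero.1 ?_).resolve_left (sub_ne_zero.2 hb)
    linear_combination hdiff / 2
  have hsymbol : ρ.symbol φ w = 0 :=
    eq_zero_of_forall_eval_eq_zero (Int.cast_injective (α := ℂ)) fun x => by
      rw [eval_symbol hO, hE]
  obtain ⟨n, rfl⟩ : ∃ n : ℕ, i = n - 1 := ⟨(i + 1).toNat, by lia⟩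
  rw [← coeff_symbol_eq_zero_iff hO, hsymbol, coeff_zero]

lemma IsStable.eq_bot_or_eq_top (hU : ρ.IsStable lam a b U) (hO : ρ.InO) (hs : ρ.IsSimple)
    (hkill : ρ.killedFrom 1 = ⊥) (h0 : lam ≠ 0) (h1 : lam ≠ 1) (hb : b ≠ 1) :
    U = ⊥ ∨ U = ⊤ := by
  refine or_iff_not_imp_left.2 fun hne => ?_
  have hlast {v : W} (hv : v ≠ 0) :
      ∃ n : ℕ, 1 ≤ n ∧ ρ.d n v ≠ 0 ∧ v ∈ ρ.killedFrom (n + 1) :=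
    exists_d_ne_zero hO (by rwa [hkill, Submodule.mem_bot])
  obtain ⟨j, hj⟩ := Function.ne_iff.1 hne
  obtain ⟨w, hw, hw0⟩ := Submodule.exists_mem_ne_zero_of_ne_bot hj
  obtain ⟨n, -, hn, hwn⟩ := hlast hw0
  have hparity : ∀ m, ρ.d n w ∈ U (n + j + 2 * m) := fun m => by
    have := hU.d_mem_of_odd hO h0 h1 hb (s := n + 2 * m) ⟨n + m, by ring⟩ hw hwn
    rwa [add_right_comm] at this
  obtain ⟨i, hi, hi0, -⟩ := hlast hn
  have hmem : ρ.d i (ρ.d n w) ∈ ⨅ l, U l :=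
    (Submodule.mem_iInf U).2 (hU.d_mem_of_forall_mem_parity hO h0 h1 hb hparity hi)
  have hinv : ρ.Invariant (⨅ l, U l) := fun i hi u hu =>
    (Submodule.mem_iInf U).2 (hU.d_mem_of_forall_mem hO h0 h1 hb ((Submodule.mem_iInf U).1 hu) hi)
  have htop := (hs.2 _ hinv).resolve_left ((Submodule.ne_bot_iff _).2 ⟨_, hmem, hi0⟩)
  exact funext fun l => top_le_iff.1 (htop ▸ iInf_le U l)

lemma actSimple_Lact (hO : ρ.InO) (hs : ρ.IsSimple) (hkill : ρ.killedFrom 1 = ⊥) (h0 : lam ≠ 0)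
    (h1 : lam ≠ 1) (hb : b ≠ 1) : ActSimple (ρ.Lact lam a b) :=
  actSimple_Lact_iff.2 ⟨hs.1, fun _ hU => hU.eq_bot_or_eq_top hO hs hkill h0 h1 hb⟩

end Simplicity

end WittRep

theorem stmt12 {W : Type*} [AddCommGroup W] [Module ℂ W] (ρ : WittRep W)
    (hO : ρ.InO) (hnt : ¬ ρ.IsTrivial) (hs : ρ.IsSimple)
    (lam a b : ℂ) (hlam : lam ≠ 0)
    (hnhw : ¬ ∃ (w₀ : W) (c : ℂ), ρ.IsHW w₀ c) :
    ActSimple (ρ.Lact lam a b) ↔ (lam ≠ 1 ∧ b ≠ 1) :=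
  ⟨fun h => ⟨WittRep.lam_ne_one_of_actSimple hO hnt hs h,
    WittRep.b_ne_one_of_actSimple hO hs hnhw h⟩,
    fun ⟨h1, hb⟩ =>
      WittRep.actSimple_Lact hO hs (WittRep.killedFrom_one_eq_bot hO hs hnhw) hlam h1 hb⟩
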